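/- Let H be a commutative monoid with identity 1 and absorbing zero 0, let r : Set H → Set H be an ideal system on H, and let L be a multiplicative lattice. Suppose there is a bijection e from the set of r-ideals of H onto L such that e and its inverse are monotone (inclusion of r-ideals corresponds to ≤ in L) and e((X*Y)_r) = e(X) * e(Y) for all r-ideals X, Y. Then L is generated by meet principal elements: every a ∈ L satisfies a = sSup {x ∈ L | x is meet principal and x ≤ a}. -/

import Mathlib

/-- The latResidual `(a : x) = sSup {y | x*y ≤ a}` in a multiplicative lattice. -/
def latResidual {L : Type*} [CompleteLattice L] [CommMonoid L] (a x : L) : L :=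
  sSup {y | x * y ≤ a}

/-- An element `x` of a multiplicative lattice is meet principal if
`a ⊓ (x*b) = x*((a : x) ⊓ b)` for all `a, b`. -/
def MeetPrincipal {L : Type*} [CompleteLattice L] [CommMonoid L] (x : L) : Prop :=
  ∀ a b : L, a ⊓ (x * b) = x * (latResidual a x ⊓ b)

/-!
An element `x` of a multiplicative lattice is meet principal iff every element below `x * b` is of
the form `x * d` with `d ≤ b`. A principal ideal `r {c}` has this property: `r {c} * r X = c • r X`,
so an `r`-ideal `Y` contained in this product has the form `c • D` with `D ⊆ r X`, and then
`Y = r (c • D) = c • r D`. Finally, every `r`-ideal is the join of the principal ideals it contains.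
-/

theorem isQuantale_of_mul_sSup_distrib {L : Type*} [CompleteLattice L] [CommSemigroup L]
    (hdist : ∀ (a : L) (S : Set L), a * sSup S = ⨆ b ∈ S, a * b) : IsQuantale L where
  mul_sSup_distrib := hdist
  sSup_mul_distrib S a := by simp only [mul_comm _ a, hdist]

section MeetPrincipal

variable {L : Type*} [CompleteLattice L] [CommMonoid L] [IsQuantale L]

theorem le_latResidual_iff_mul_le {a x y : L} : y ≤ latResidual a x ↔ x * y ≤ a :=
  Quantale.rightMulResiduation_le_iff_mul_le

theorem meetPrincipal_iff_exists_mul_eq {x : L} :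
    MeetPrincipal x ↔ ∀ b y, y ≤ x * b → ∃ d ≤ b, x * d = y := by
  constructor
  · intro hx b y hy
    exact ⟨latResidual y x ⊓ b, inf_le_right, by rw [← hx, inf_eq_left.mpr hy]⟩
  · intro hx a b
    apply le_antisymm
    · obtain ⟨d, hdb, hd⟩ := hx b (a ⊓ x * b) inf_le_right
      have hda : d ≤ latResidual a x := le_latResidual_iff_mul_le.mpr (hd.trans_le inf_le_left)
      rw [← hd]
      exact mul_le_mul_right (le_inf hda hdb) x
    · refine le_inf (le_latResidual_iff_mul_le.mp inf_le_left) ?_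
      exact mul_le_mul_right inf_le_right x

end MeetPrincipal

open scoped Pointwise

/-- An ideal system on a commutative monoid, which need not have a zero. Its `r`-ideals are the
elements of `Set.range r`. -/
structure IsIdealSystem {H : Type*} [CommMonoid H] (r : Set H → Set H) : Prop where
  mul_mem : ∀ X, ∀ x ∈ X, ∀ h, x * h ∈ r X
  mono : ∀ X Y, X ⊆ Y → r X ⊆ r Y
  idem : ∀ X, r (r X) = r X
  smul : ∀ (c : H) X, c • r X = r (c • X)

/-- The `r`-ideal generated by a single element. -/
def principalIdeal {H : Type*} (r : Set H → Set H) (c : H) : Set.range r :=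
  Set.rangeFactorization r {c}

/-- The product of `r`-ideals, that is, the `r`-ideal generated by their pointwise product. -/
def idealMul {H : Type*} [Mul H] {r : Set H → Set H} (A B : Set.range r) : Set.range r :=
  Set.rangeFactorization r (A.1 * B.1)

namespace IsIdealSystem

variable {H : Type*} [CommMonoid H] {r : Set H → Set H} (hr : IsIdealSystem r)

include hr

theorem subset_apply (X : Set H) : X ⊆ r X := fun x hx => by
  simpa only [mul_one] using hr.mul_mem X x hx 1

theorem apply_subset_apply_iff {X Y : Set H} : r X ⊆ r Y ↔ X ⊆ r Y :=
  ⟨(hr.subset_apply X).trans, fun h => hr.idem Y ▸ hr.mono _ _ h⟩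

theorem apply_one : r 1 = Set.univ :=
  Set.eq_univ_of_forall fun h => by simpa only [one_mul] using hr.mul_mem 1 1 Set.one_mem_one h

theorem univ_mul_apply (X : Set H) : Set.univ * r X = r X := by
  apply Set.Subset.antisymm
  · rintro _ ⟨h, -, x, hx, rfl⟩
    simpa only [hr.idem, mul_comm h] using hr.mul_mem (r X) x hx h
  · exact Set.subset_mul_right _ (Set.mem_univ 1)

theorem apply_singleton (c : H) : r {c} = c • Set.univ := by
  rw [← hr.apply_one, hr.smul, ← Set.singleton_one, Set.smul_set_singleton, smul_eq_mul, mul_one]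

theorem apply_singleton_mul_apply (c : H) (X : Set H) : r {c} * r X = c • r X := by
  rw [hr.apply_singleton, smul_mul_assoc, hr.univ_mul_apply]

theorem apply_apply_singleton_mul_apply (c : H) (X : Set H) : r (r {c} * r X) = c • r X := by
  rw [hr.apply_singleton_mul_apply, ← hr.smul, hr.idem]

theorem exists_principalIdeal_mul_eq {c : H} {A B : Set.range r}
    (h : A ≤ idealMul (principalIdeal r c) B) :
    ∃ D ≤ B, idealMul (principalIdeal r c) D = A := by
  obtain ⟨_, Y, rfl⟩ := A
  obtain ⟨_, X, rfl⟩ := B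
  have hY : r Y ⊆ c • r X := hr.apply_apply_singleton_mul_apply c X ▸ h
  obtain ⟨D, hDX, hDY⟩ := Set.subset_image_iff.mp hY
  refine ⟨⟨r D, D, rfl⟩, hr.apply_subset_apply_iff.mpr hDX, Subtype.ext ?_⟩
  calc
    r (r {c} * r D) = r (c • D) := by rw [hr.apply_apply_singleton_mul_apply, hr.smul]
    _ = r (r Y) := congrArg r hDY
    _ = r Y := hr.idem Y

theorem principalIdeal_le_iff {c : H} {A : Set.range r} : principalIdeal r c ≤ A ↔ c ∈ A.1 := by
  obtain ⟨_, X, rfl⟩ := A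
  exact hr.apply_subset_apply_iff.trans Set.singleton_subset_iff

theorem map_eq_iSup_map_principalIdeal {L : Type*} [CompleteLattice L] (e : Set.range r ≃o L)
    (A : Set.range r) : e A = ⨆ c ∈ A.1, e (principalIdeal r c) := by
  apply le_antisymm
  · rw [← e.le_symm_apply]
    intro c hc
    rw [← hr.principalIdeal_le_iff, e.le_symm_apply]
    exact le_iSup₂_of_le c hc le_rfl
  · exact iSup₂_le fun c hc => e.monotone (hr.principalIdeal_le_iff.mpr hc)

theorem meetPrincipal_map_principalIdeal {L : Type*} [CompleteLattice L] [CommMonoid L]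
    [IsQuantale L] (e : Set.range r ≃o L)
    (e_mul : ∀ A B : Set.range r, e (idealMul A B) = e A * e B) (c : H) :
    MeetPrincipal (e (principalIdeal r c)) := by
  rw [meetPrincipal_iff_exists_mul_eq]
  intro b y hy
  obtain ⟨B, rfl⟩ := e.surjective b
  obtain ⟨A, rfl⟩ := e.surjective y
  rw [← e_mul, e.le_iff_le] at hy
  obtain ⟨D, hDB, rfl⟩ := hr.exists_principalIdeal_mul_eq hy
  exact ⟨e D, e.monotone hDB, (e_mul _ D).symm⟩

end IsIdealSystem

theorem stmt_8_general {L : Type*} [CompleteLattice L] [CommMonoid L] [IsQuantale L]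
    {H : Type*} [CommMonoid H] {r : Set H → Set H} (hr : IsIdealSystem r) (e : Set.range r ≃o L)
    (e_mul : ∀ A B : Set.range r, e (idealMul A B) = e A * e B) (a : L) :
    a = sSup {x | MeetPrincipal x ∧ x ≤ a} := by
  refine le_antisymm ?_ (sSup_le fun x hx => hx.2)
  obtain ⟨A, rfl⟩ := e.surjective a
  refine (hr.map_eq_iSup_map_principalIdeal e A).trans_le (iSup₂_le fun c hc => le_sSup ?_)
  exact ⟨hr.meetPrincipal_map_principalIdeal e e_mul c,
    e.monotone (hr.principalIdeal_le_iff.mpr hc)⟩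

/-- if a multiplicative lattice `L` is (order- and
multiplication-) isomorphic to the lattice of `r`-ideals of an ideal system `r`
on a commutative monoid `H` with zero, then `L` is generated by meet principal
elements. -/
theorem stmt_8 {L : Type*} [CompleteLattice L] [CommMonoid L]
    (hdist : ∀ (a : L) (S : Set L), a * sSup S = ⨆ b ∈ S, a * b)
    (hone : (1 : L) = ⊤)
    {H : Type*} [CommMonoidWithZero H] (r : Set H → Set H)
    (s1 : ∀ X : Set H, ∀ x ∈ X, ∀ h : H, x * h ∈ r X)
    (s2 : ∀ X Y : Set H, X ⊆ Y → r X ⊆ r Y)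
    (s3 : ∀ X : Set H, r (r X) = r X)
    (s4 : ∀ (c : H) (X : Set H), (fun y => c * y) '' r X = r ((fun y => c * y) '' X))
    (e : {A : Set H // A ∈ Set.range r} → L)
    (e_bij : Function.Bijective e)
    (e_mono : ∀ A B : {A : Set H // A ∈ Set.range r}, A.1 ⊆ B.1 → e A ≤ e B)
    (e_mono_inv : ∀ A B : {A : Set H // A ∈ Set.range r}, e A ≤ e B → A.1 ⊆ B.1)
    (e_mul : ∀ A B : {A : Set H // A ∈ Set.range r},
      e ⟨r (Set.image2 (· * ·) A.1 B.1), Set.mem_range_self _⟩ = e A * e B) :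
    ∀ a : L, a = sSup {x | MeetPrincipal x ∧ x ≤ a} := by
  have : IsQuantale L := isQuantale_of_mul_sSup_distrib hdist
  exact stmt_8_general ⟨s1, s2, s3, s4⟩
    ⟨Equiv.ofBijective e e_bij, fun {A B} => ⟨e_mono_inv A B, e_mono A B⟩⟩ e_mul
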